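/- Let k ≥ 1, r ≥ 1, and suppose the data matrices X_i ∈ ℝ^{m_i×d} satisfy X_iᵀX_i = α_i Σ for all i = 1,…,k, where Σ ∈ ℝ^{d×d} is positive definite and α_i > 0. Let y_i ∈ ℝ^{m_i}, and consider the function f(A_1,…,A_k;B) = Σ_{i=1}^k ‖X_i B A_i − y_i‖² on the joint parameter space (A_1,…,A_k,B) ∈ (ℝ^r)^k × ℝ^{d×r}. Then every local minimum of f is a global minimum of f. -/

import Mathlib

open Matrix BigOperators

/-- Euclidean norm of a vector in `ℝ^n`. -/
noncomputable def vnorm {n : ℕ} (v : Fin n → ℝ) : ℝ := Real.sqrt (∑ i, v i ^ 2)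

/-!
The hypothesis `(X i)ᵀ * X i = α i • S` makes every `X i` a scaled isometric copy of one linear map
`T`, so completing squares turns the objective, up to a constant and an open change of variables,
into the loss `∑ i, ‖B (A i) - m i‖ ^ 2` of a low-rank approximation of vectors `m i`.

Let `(A, B)` be a local minimum of that loss. If `B` is not injective, moving `A` along its kernel
costs nothing, and stationarity at the moved points makes all residuals vanish. If `B` is injective,
the gradient condition says that `B (A i)` is the projection of `m i` onto the range of `B` and that
this range is invariant under the frame operator `∑ i, (m i) (m i)ᵀ`, while the Hessian condition
bounds the Rayleigh quotients of the frame operator on the orthogonal complement of the range by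
those on the range. By Ky Fan's principle the range then captures as much of the `m i` as any
subspace of dimension at most that of the domain of `B`.
-/

open scoped RealInnerProductSpace
open Filter Topology Module

section Trace

variable {E : Type*} [NormedAddCommGroup E] [InnerProductSpace ℝ E]

theorem trace_comp_starProjection_add_orthogonal (T : E →ₗ[ℝ] E) (V : Submodule ℝ E)
    [V.HasOrthogonalProjection] :
    LinearMap.trace ℝ E (T ∘ₗ V.starProjection) + LinearMap.trace ℝ E (T ∘ₗ Vᗮ.starProjection) =
      LinearMap.trace ℝ E T := by
  rw [← map_add, ← LinearMap.comp_add, ← ContinuousLinearMap.toLinearMap_add,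
    ← V.id_eq_sum_starProjection_self_orthogonalComplement, ContinuousLinearMap.coe_id,
    LinearMap.comp_id]

theorem isPositive_comp_starProjection {T : E →ₗ[ℝ] E} (hT : T.IsSymmetric) {U : Submodule ℝ E}
    [U.HasOrthogonalProjection] (hU : U ∈ End.invtSubmodule T) (hpos : ∀ x ∈ U, 0 ≤ ⟪T x, x⟫) :
    (T ∘ₗ U.starProjection).IsPositive := by
  have hTU (x : E) : U.starProjection (T (U.starProjection x)) = T (U.starProjection x) :=
    U.starProjection_eq_self_iff.mpr (hU (U.starProjection_apply_mem x))
  have hmove (x y : E) : ⟪T (U.starProjection x), y⟫ =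
      ⟪T (U.starProjection x), U.starProjection y⟫ := by
    rw [← U.inner_starProjection_left_eq_right, hTU]
  refine ⟨fun x y => ?_, fun x => ?_⟩
  · calc ⟪T (U.starProjection x), y⟫
        = ⟪T (U.starProjection x), U.starProjection y⟫ := hmove x y
      _ = ⟪U.starProjection x, T (U.starProjection y)⟫ := hT _ _
      _ = ⟪x, T (U.starProjection y)⟫ := by rw [U.inner_starProjection_left_eq_right, hTU]
  · simpa [hmove x x] using hpos _ (U.starProjection_apply_mem x)

variable [FiniteDimensional ℝ E]

theorem trace_starProjection (V : Submodule ℝ E) :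
    LinearMap.trace ℝ E (V.starProjection : E →ₗ[ℝ] E) = finrank ℝ V :=
  LinearMap.IsProj.trace
    ⟨V.starProjection_apply_mem, fun _ hx => V.starProjection_eq_self_iff.mpr hx⟩

theorem trace_comp_starProjection_nonneg {T : E →ₗ[ℝ] E} (hT : T.IsPositive)
    (V : Submodule ℝ E) : 0 ≤ LinearMap.trace ℝ E (T ∘ₗ V.starProjection) := by
  have hconj := hT.conj_adjoint (V.starProjection : E →ₗ[ℝ] E)
  rw [V.starProjection_isSymmetric.adjoint_eq] at hconj
  have hidem : (V.starProjection : E →ₗ[ℝ] E) ∘ₗ (V.starProjection : E →ₗ[ℝ] E) =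
      V.starProjection := V.isSymmetricProjection_starProjection.isIdempotentElem
  rw [← hidem, ← LinearMap.comp_assoc, LinearMap.trace_comp_comm']
  exact hconj.trace_nonneg

theorem trace_comp_starProjection_le_of_nonneg_of_nonpos {T : E →ₗ[ℝ] E} (hT : T.IsSymmetric)
    {U : Submodule ℝ E} (hU : U ∈ End.invtSubmodule T) (hpos : ∀ x ∈ U, 0 ≤ ⟪T x, x⟫)
    (hneg : ∀ w ∈ Uᗮ, ⟪T w, w⟫ ≤ 0) (V : Submodule ℝ E) :
    LinearMap.trace ℝ E (T ∘ₗ V.starProjection) ≤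
      LinearMap.trace ℝ E (T ∘ₗ U.starProjection) := by
  set N : E →ₗ[ℝ] E := T ∘ₗ U.starProjection
  set L : E →ₗ[ℝ] E := (-T) ∘ₗ Uᗮ.starProjection
  have hN : N.IsPositive := isPositive_comp_starProjection hT hU hpos
  have hL : L.IsPositive := isPositive_comp_starProjection (fun x y => by simpa using hT x y)
    (fun w hw => by simpa using hT.orthogonalComplement_mem_invtSubmodule hU hw)
    (fun w hw => by simpa using hneg w hw)
  have hsplit : T = N - L := by
    ext x
    simp [N, L]
  calc LinearMap.trace ℝ E (T ∘ₗ V.starProjection)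
      = LinearMap.trace ℝ E (N ∘ₗ V.starProjection) -
          LinearMap.trace ℝ E (L ∘ₗ V.starProjection) := by
        rw [← map_sub, ← LinearMap.sub_comp, ← hsplit]
    _ ≤ LinearMap.trace ℝ E (N ∘ₗ V.starProjection) :=
        sub_le_self _ (trace_comp_starProjection_nonneg hL V)
    _ ≤ LinearMap.trace ℝ E (N ∘ₗ V.starProjection) +
          LinearMap.trace ℝ E (N ∘ₗ Vᗮ.starProjection) :=
        le_add_of_nonneg_right (trace_comp_starProjection_nonneg hN Vᗮ)
    _ = LinearMap.trace ℝ E N := trace_comp_starProjection_add_orthogonal N V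

theorem trace_comp_starProjection_le_of_separated {T : E →ₗ[ℝ] E} (hT : T.IsSymmetric)
    {U : Submodule ℝ E} (hU : U ∈ End.invtSubmodule T) {c : ℝ} (hc : 0 ≤ c)
    (hcU : ∀ x ∈ U, c * ‖x‖ ^ 2 ≤ ⟪T x, x⟫) (hcUo : ∀ w ∈ Uᗮ, ⟪T w, w⟫ ≤ c * ‖w‖ ^ 2)
    {V : Submodule ℝ E} (hVU : finrank ℝ V ≤ finrank ℝ U) :
    LinearMap.trace ℝ E (T ∘ₗ V.starProjection) ≤
      LinearMap.trace ℝ E (T ∘ₗ U.starProjection) := by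
  set S : E →ₗ[ℝ] E := T - c • LinearMap.id
  have hSx (x : E) : ⟪S x, x⟫ = ⟪T x, x⟫ - c * ‖x‖ ^ 2 := by
    simp [S, inner_sub_left, real_inner_smul_left]
  have hle := trace_comp_starProjection_le_of_nonneg_of_nonpos
    (hT.sub (LinearMap.IsSymmetric.id.smul (by simp)) : S.IsSymmetric)
    (fun x hx => U.sub_mem (hU hx) (U.smul_mem c hx))
    (fun x hx => (sub_nonneg.mpr (hcU x hx)).trans_eq (hSx x).symm)
    (fun w hw => (hSx w).trans_le (sub_nonpos.mpr (hcUo w hw))) V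
  have htrace (W : Submodule ℝ E) : LinearMap.trace ℝ E (T ∘ₗ W.starProjection) =
      LinearMap.trace ℝ E (S ∘ₗ W.starProjection) + c * finrank ℝ W := by
    simp [S, LinearMap.sub_comp, LinearMap.smul_comp, trace_starProjection]
  rw [htrace, htrace]
  gcongr

-- Ky Fan's principle; the hypothesis compares Rayleigh quotients on `U` and on `Uᗮ`.
theorem trace_comp_starProjection_le {T : E →ₗ[ℝ] E} (hT : T.IsPositive)
    {U : Submodule ℝ E} (hU : U ∈ End.invtSubmodule T)
    (hUo : ∀ x ∈ U, ∀ w ∈ Uᗮ, ‖x‖ ^ 2 * ⟪T w, w⟫ ≤ ‖w‖ ^ 2 * ⟪T x, x⟫)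
    {V : Submodule ℝ E} (hVU : finrank ℝ V ≤ finrank ℝ U) :
    LinearMap.trace ℝ E (T ∘ₗ V.starProjection) ≤
      LinearMap.trace ℝ E (T ∘ₗ U.starProjection) := by
  rcases eq_or_ne U ⊥ with rfl | hU_ne
  · have hV : V = ⊥ := Submodule.finrank_eq_zero.mp (by simpa using hVU)
    rw [hV]
  obtain ⟨x₀, hx₀, hx₀_ne⟩ := Submodule.exists_mem_ne_zero_of_ne_bot hU_ne
  let rayleigh : E → ℝ := fun x => ⟪T x, x⟫ / ‖x‖ ^ 2
  have hrayleigh (x : E) : ⟪T x, x⟫ = rayleigh x * ‖x‖ ^ 2 := by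
    rcases eq_or_ne x 0 with rfl | hx
    · simp
    · exact (div_mul_cancel₀ _ (by positivity)).symm
  have hle : ∀ a ∈ rayleigh '' Uᗮ, ∀ b ∈ rayleigh '' {x | x ∈ U ∧ x ≠ 0}, a ≤ b := by
    rintro _ ⟨w, hw, rfl⟩ _ ⟨x, ⟨hx, hx_ne⟩, rfl⟩
    rcases eq_or_ne w 0 with rfl | hw_ne
    · simpa [rayleigh] using div_nonneg (hT.inner_nonneg_left x) (sq_nonneg ‖x‖)
    · rw [div_le_div_iff₀ (by positivity) (by positivity)]
      linarith [hUo x hx w hw]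
  have hU_nonempty : (rayleigh '' {x | x ∈ U ∧ x ≠ 0}).Nonempty := ⟨_, x₀, ⟨hx₀, hx₀_ne⟩, rfl⟩
  obtain ⟨c, hcUo, hcU⟩ := exists_between_of_forall_le (Uᗮ.nonempty.image rayleigh) hU_nonempty hle
  refine trace_comp_starProjection_le_of_separated hT.isSymmetric hU (c := c) ?_ ?_ ?_ hVU
  · simpa [rayleigh] using hcUo ⟨0, Uᗮ.zero_mem, rfl⟩
  · intro x hx
    rcases eq_or_ne x 0 with rfl | hx_ne
    · simp
    · rw [hrayleigh]
      gcongr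
      exact hcU ⟨x, ⟨hx, hx_ne⟩, rfl⟩
  · intro w hw
    rw [hrayleigh]
    gcongr
    exact hcUo ⟨w, hw, rfl⟩

end Trace

section FrameOperator

variable {ι : Type*} [Fintype ι]
variable {E : Type*} [NormedAddCommGroup E] [InnerProductSpace ℝ E]

/-- The frame operator `x ↦ ∑ i, ⟪m i, x⟫ • m i` of a finite family of vectors; for `m` the
columns of a matrix `M` it is `M * Mᵀ`. -/
noncomputable def frameOperator (m : ι → E) : E →ₗ[ℝ] E :=
  ∑ i, (InnerProductSpace.rankOne ℝ (m i) (m i)).toLinearMap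

theorem frameOperator_apply (m : ι → E) (x : E) :
    frameOperator m x = ∑ i, ⟪m i, x⟫ • m i := by
  simp [frameOperator]

theorem inner_frameOperator_left (m : ι → E) (x y : E) :
    ⟪frameOperator m x, y⟫ = ∑ i, ⟪m i, x⟫ * ⟪m i, y⟫ := by
  simp [frameOperator_apply, sum_inner, real_inner_smul_left]

theorem inner_frameOperator_self (m : ι → E) (x : E) :
    ⟪frameOperator m x, x⟫ = ∑ i, ⟪m i, x⟫ ^ 2 := by
  simp only [inner_frameOperator_left, sq]

theorem isPositive_frameOperator (m : ι → E) : (frameOperator m).IsPositive := by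
  refine ⟨fun x y => ?_, fun x => ?_⟩
  · rw [real_inner_comm (frameOperator m y) x]
    simp only [inner_frameOperator_left, mul_comm]
  · exact (Finset.sum_nonneg fun i _ => sq_nonneg ⟪m i, x⟫).trans_eq
      (inner_frameOperator_self m x).symm

theorem trace_frameOperator_comp_starProjection [FiniteDimensional ℝ E] (m : ι → E)
    (V : Submodule ℝ E) :
    LinearMap.trace ℝ E (frameOperator m ∘ₗ V.starProjection) =
      ∑ i, ‖V.starProjection (m i)‖ ^ 2 := by
  have hcomp : frameOperator m ∘ₗ V.starProjection =
      ∑ i, (InnerProductSpace.rankOne ℝ (m i) (V.starProjection (m i))).toLinearMap := by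
    ext x
    simp [frameOperator_apply, V.inner_starProjection_left_eq_right]
  simp only [hcomp, map_sum, InnerProductSpace.trace_rankOne]
  exact Finset.sum_congr rfl fun i _ => V.re_inner_starProjection_eq_normSq (m i)

end FrameOperator

section LocalMin

theorem eq_zero_and_nonneg_of_isLocalMin {φ g : ℝ → ℝ} {a : ℝ} (hφ : IsLocalMin φ 0)
    (hexpand : ∀ t, φ t = φ 0 + t * a + t ^ 2 * g t) (hg : ContinuousAt g 0) :
    a = 0 ∧ 0 ≤ g 0 := by
  have hderiv : HasDerivAt φ a 0 := by
    have hslope : Tendsto (fun t => a + t * g t) (𝓝[≠] 0) (𝓝 a) := by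
      have hcont : ContinuousAt (fun t => a + t * g t) 0 := by fun_prop
      simpa using hcont.tendsto.mono_left nhdsWithin_le_nhds
    refine hasDerivAt_iff_tendsto_slope_zero.mpr
      (hslope.congr' (eventually_mem_nhdsWithin.mono fun t (ht : t ≠ 0) => ?_))
    simp only [zero_add, hexpand t, smul_eq_mul]
    field_simp
    ring
  have ha : a = 0 := hφ.hasDerivAt_eq_zero hderiv
  have hg_ne : Tendsto g (𝓝[≠] 0) (𝓝 (g 0)) := hg.tendsto.mono_left nhdsWithin_le_nhds
  refine ⟨ha, ge_of_tendsto hg_ne ?_⟩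
  filter_upwards [hφ.filter_mono nhdsWithin_le_nhds, self_mem_nhdsWithin] with t ht ht_ne
  have hquad : 0 ≤ t ^ 2 * g t := by simpa [hexpand t, ha] using ht
  exact nonneg_of_mul_nonneg_right hquad (sq_pos_of_ne_zero ht_ne)

theorem eventually_isLocalMin_of_eq {P : Type*} [TopologicalSpace P] {f : P → ℝ} {p : P}
    (hp : IsLocalMin f p) : ∀ᶠ q in 𝓝 p, f q = f p → IsLocalMin f q :=
  (eventually_eventually_nhds.mpr hp).mono fun _ hq heq => hq.mono fun _ h => heq.trans_le h

theorem isLocalMin_of_comp_isOpenMap {P Q : Type*} [TopologicalSpace P] [TopologicalSpace Q]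
    {g : Q → ℝ} {ψ : P → Q} {p : P} (hψ : IsOpenMap ψ) (hp : IsLocalMin (g ∘ ψ) p) :
    IsLocalMin g (ψ p) :=
  hψ.nhds_le p (mem_map.mpr hp)

end LocalMin

section LowRankLoss

variable {ι : Type*} [Fintype ι]
variable {W : Type*} [NormedAddCommGroup W] [NormedSpace ℝ W]
variable {E : Type*} [NormedAddCommGroup E] [InnerProductSpace ℝ E]

/-- The squared error of the factored approximation `B (A i)` of the targets `m i`, as a function
of the pair `(A, B)`; it is low-rank matrix factorization with the columns of the right-hand
factor indexed by `ι`. -/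
def lowRankLoss (m : ι → E) (p : (ι → W) × (W →L[ℝ] E)) : ℝ :=
  ∑ i, ‖p.2 (p.1 i) - m i‖ ^ 2

theorem lowRankLoss_add_smul (m : ι → E) (p h : (ι → W) × (W →L[ℝ] E)) (t : ℝ) :
    lowRankLoss m (p + t • h) = lowRankLoss m p +
      t * (2 * ∑ i, ⟪p.2 (p.1 i) - m i, p.2 (h.1 i) + h.2 (p.1 i)⟫) +
      t ^ 2 * ∑ i, (‖p.2 (h.1 i) + h.2 (p.1 i) + t • h.2 (h.1 i)‖ ^ 2 +
        2 * ⟪p.2 (p.1 i) - m i, h.2 (h.1 i)⟫) := by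
  simp only [lowRankLoss, Finset.mul_sum, ← Finset.sum_add_distrib]
  refine Finset.sum_congr rfl fun i _ => ?_
  have hres : (p + t • h).2 ((p + t • h).1 i) - m i = (p.2 (p.1 i) - m i) +
      t • (p.2 (h.1 i) + h.2 (p.1 i) + t • h.2 (h.1 i)) := by
    simp only [Prod.fst_add, Prod.snd_add, Prod.smul_fst, Prod.smul_snd, Pi.add_apply,
      Pi.smul_apply, _root_.add_apply, _root_.smul_apply, map_add, map_smul]
    module
  rw [hres, norm_add_sq_real, norm_smul, mul_pow, Real.norm_eq_abs, sq_abs, real_inner_smul_right,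
    inner_add_right _ _ (t • _), real_inner_smul_right]
  ring

variable {m : ι → E} {p : (ι → W) × (W →L[ℝ] E)}

namespace lowRankLoss

theorem gradient_eq_zero_and_hessian_nonneg_of_isLocalMin (hp : IsLocalMin (lowRankLoss m) p)
    (h : (ι → W) × (W →L[ℝ] E)) :
    ∑ i, ⟪p.2 (p.1 i) - m i, p.2 (h.1 i) + h.2 (p.1 i)⟫ = 0 ∧
      0 ≤ ∑ i, (‖p.2 (h.1 i) + h.2 (p.1 i)‖ ^ 2 + 2 * ⟪p.2 (p.1 i) - m i, h.2 (h.1 i)⟫) := by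
  have hline : IsLocalMin (fun t : ℝ => lowRankLoss m (p + t • h)) 0 := by
    have hp₀ : IsLocalMin (lowRankLoss m) (p + (0 : ℝ) • h) := by simpa using hp
    exact hp₀.comp_continuous (g := fun t : ℝ => p + t • h) (by fun_prop)
  have hcoeffs := eq_zero_and_nonneg_of_isLocalMin hline
    (fun t => by simpa using lowRankLoss_add_smul m p h t) (by fun_prop)
  simpa using hcoeffs

theorem inner_apply_eq_of_isLocalMin (hp : IsLocalMin (lowRankLoss m) p) (i : ι) {x : E}
    (hx : x ∈ p.2.range) : ⟪p.2 (p.1 i), x⟫ = ⟪m i, x⟫ := by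
  obtain ⟨u, hu⟩ := hx
  have hgrad : ∑ j, ⟪p.2 (p.1 j) - m j, x⟫ * ⟪p.2 (p.1 j) - m j, x⟫ = 0 := by
    simpa [real_inner_smul_right, ← hu] using (gradient_eq_zero_and_hessian_nonneg_of_isLocalMin hp
      (fun j => ⟪p.2 (p.1 j) - m j, x⟫ • u, 0)).1
  rw [← sub_eq_zero, ← inner_sub_left]
  simpa using (Finset.sum_mul_self_eq_zero_iff _ _).mp hgrad i (Finset.mem_univ i)

theorem sum_smul_residual_eq_zero_of_isLocalMin (hp : IsLocalMin (lowRankLoss m) p)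
    (l : W →L[ℝ] ℝ) : ∑ i, l (p.1 i) • (p.2 (p.1 i) - m i) = 0 := by
  refine ext_inner_right ℝ fun e => ?_
  simpa [sum_inner, real_inner_smul_left, real_inner_smul_right] using
    (gradient_eq_zero_and_hessian_nonneg_of_isLocalMin hp (0, l.smulRight e)).1

theorem apply_eq_starProjection_of_isLocalMin (hp : IsLocalMin (lowRankLoss m) p) (i : ι)
    [p.2.range.HasOrthogonalProjection] : p.2 (p.1 i) = p.2.range.starProjection (m i) := by
  refine (Submodule.eq_starProjection_of_mem_of_inner_eq_zero
    (LinearMap.mem_range_self p.2.toLinearMap _) fun x hx => ?_).symm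
  rw [inner_sub_left, sub_eq_zero]
  exact (inner_apply_eq_of_isLocalMin hp i hx).symm

theorem range_mem_invtSubmodule_of_isLocalMin (hp : IsLocalMin (lowRankLoss m) p) :
    p.2.range ∈ End.invtSubmodule (frameOperator m) := by
  intro x hx
  refine ⟨∑ i, ⟪x, p.2 (p.1 i)⟫ • p.1 i, ?_⟩
  have hsum := sum_smul_residual_eq_zero_of_isLocalMin hp ((innerSL ℝ x).comp p.2)
  simp only [ContinuousLinearMap.comp_apply, innerSL_apply_apply, smul_sub,
    Finset.sum_sub_distrib, sub_eq_zero] at hsum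
  calc p.2 (∑ i, ⟪x, p.2 (p.1 i)⟫ • p.1 i)
      = ∑ i, ⟪x, p.2 (p.1 i)⟫ • m i := by simp only [map_sum, map_smul, hsum]
    _ = frameOperator m x := by
        simp only [frameOperator_apply, real_inner_comm _ x, inner_apply_eq_of_isLocalMin hp _ hx]

theorem norm_sq_mul_inner_frameOperator_le_of_isLocalMin (hp : IsLocalMin (lowRankLoss m) p)
    {x w : E} (hx : x ∈ p.2.range) (hw : w ∈ p.2.rangeᗮ) :
    ‖x‖ ^ 2 * ⟪frameOperator m w, w⟫ ≤ ‖w‖ ^ 2 * ⟪frameOperator m x, x⟫ := by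
  obtain ⟨u, hu : p.2 u = x⟩ := id hx
  have hterm (i : ι) :
      ‖p.2 (⟪m i, w⟫ • u) + ⟪x, p.2 (p.1 i)⟫ • w‖ ^ 2 +
          2 * ⟪p.2 (p.1 i) - m i, ⟪x, p.2 (⟪m i, w⟫ • u)⟫ • w⟫ =
        ‖w‖ ^ 2 * ⟪m i, x⟫ ^ 2 - ‖x‖ ^ 2 * ⟪m i, w⟫ ^ 2 := by
    have horth : ⟪⟪m i, w⟫ • x, ⟪m i, x⟫ • w⟫ = 0 := by
      rw [real_inner_smul_left, real_inner_smul_right, hw x hx, mul_zero, mul_zero]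
    have hres : ⟪p.2 (p.1 i) - m i, w⟫ = -⟪m i, w⟫ := by
      rw [inner_sub_left, hw (p.2 (p.1 i)) (LinearMap.mem_range_self p.2.toLinearMap _), zero_sub]
    rw [map_smul, hu, real_inner_comm _ x, inner_apply_eq_of_isLocalMin hp i hx, norm_add_sq_real,
      horth, real_inner_smul_right, real_inner_smul_right, real_inner_self_eq_norm_sq, hres,
      norm_smul, norm_smul, mul_pow, mul_pow, Real.norm_eq_abs, Real.norm_eq_abs, sq_abs, sq_abs]
    ring
  -- This direction rotates the range of `B` from `x` towards `w`.
  have hhess := (gradient_eq_zero_and_hessian_nonneg_of_isLocalMin hp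
    (fun i => ⟪m i, w⟫ • u, ((innerSL ℝ x).comp p.2).smulRight w)).2
  simp only [ContinuousLinearMap.smulRight_apply, ContinuousLinearMap.comp_apply,
    innerSL_apply_apply, hterm, Finset.sum_sub_distrib, ← Finset.mul_sum,
    ← inner_frameOperator_self] at hhess
  exact sub_nonneg.mp hhess

-- Moving `A` along the kernel of `B` does not change the loss, so the moved points are local minima
-- too and satisfy the same stationarity condition.
theorem sum_smul_residual_eq_zero_of_isLocalMin_of_apply_eq_zero (hp : IsLocalMin (lowRankLoss m) p)
    {c : ι → W} (hc : ∀ i, p.2 (c i) = 0) (l : W →L[ℝ] ℝ) :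
    ∑ i, l (c i) • (p.2 (p.1 i) - m i) = 0 := by
  let path : ℝ → (ι → W) × (W →L[ℝ] E) := fun t => (p.1 + t • c, p.2)
  have hpath_apply (t : ℝ) (i : ι) : p.2 ((path t).1 i) = p.2 (p.1 i) := by simp [path, hc]
  have hpath : Tendsto path (𝓝 0) (𝓝 p) := by
    have hcont : Continuous path := by fun_prop
    simpa [path] using hcont.tendsto 0
  have hmin : ∀ᶠ t in 𝓝[≠] (0 : ℝ), IsLocalMin (lowRankLoss m) (path t) :=
    ((hpath.eventually (eventually_isLocalMin_of_eq hp)).filter_mono nhdsWithin_le_nhds).mono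
      fun t ht => ht (by simp only [lowRankLoss, hpath_apply, path])
  obtain ⟨t, ht, ht_ne : t ≠ 0⟩ := (hmin.and eventually_mem_nhdsWithin).exists
  have hmoved : ∑ i, l (p.1 i + t • c i) • (p.2 (p.1 i) - m i) = 0 := by
    simpa [hpath_apply, path, hc] using sum_smul_residual_eq_zero_of_isLocalMin ht l
  simpa [add_smul, Finset.sum_add_distrib, sum_smul_residual_eq_zero_of_isLocalMin hp l, mul_smul,
    ← Finset.smul_sum, ht_ne] using hmoved

theorem apply_eq_of_isLocalMin_of_not_injective (hp : IsLocalMin (lowRankLoss m) p)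
    (hB : ¬ Function.Injective p.2) (i : ι) : p.2 (p.1 i) = m i := by
  obtain ⟨v, hv, hv_ne⟩ : ∃ v, p.2 v = 0 ∧ v ≠ 0 := by
    simpa [injective_iff_map_eq_zero] using hB
  obtain ⟨l, hl⟩ := SeparatingDual.exists_eq_one (R := ℝ) hv_ne
  set R : ι → E := fun j => p.2 (p.1 j) - m j
  have hsum : frameOperator R (R i) = 0 := by
    simpa [hl, frameOperator_apply, R] using
      sum_smul_residual_eq_zero_of_isLocalMin_of_apply_eq_zero hp (c := fun j => ⟪R j, R i⟫ • v)
        (fun j => by rw [map_smul, hv, smul_zero]) l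
  have hsq : ∑ j, ⟪R j, R i⟫ ^ 2 = 0 := by
    rw [← inner_frameOperator_self, hsum, inner_zero_left]
  have hRi : ⟪R i, R i⟫ ^ 2 = 0 :=
    (Finset.sum_eq_zero_iff_of_nonneg fun _ _ => sq_nonneg _).mp hsq i (Finset.mem_univ i)
  exact sub_eq_zero.mp (inner_self_eq_zero.mp (pow_eq_zero_iff two_ne_zero |>.mp hRi))

end lowRankLoss

variable [FiniteDimensional ℝ E]

theorem sum_norm_sq_starProjection_orthogonal_le_lowRankLoss (m : ι → E)
    (q : (ι → W) × (W →L[ℝ] E)) :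
    ∑ i, ‖q.2.rangeᗮ.starProjection (m i)‖ ^ 2 ≤ lowRankLoss m q := by
  refine Finset.sum_le_sum fun i _ => ?_
  have hker : q.2.rangeᗮ.starProjection (q.2 (q.1 i)) = 0 :=
    Submodule.starProjection_orthogonal_apply_eq_zero (LinearMap.mem_range_self q.2.toLinearMap _)
  have hle := q.2.rangeᗮ.norm_starProjection_apply_le (q.2 (q.1 i) - m i)
  rw [map_sub, hker, zero_sub, norm_neg] at hle
  gcongr

theorem lowRankLoss_eq_of_isLocalMin (hp : IsLocalMin (lowRankLoss m) p) :
    lowRankLoss m p = ∑ i, ‖p.2.rangeᗮ.starProjection (m i)‖ ^ 2 := by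
  refine Finset.sum_congr rfl fun i _ => ?_
  rw [lowRankLoss.apply_eq_starProjection_of_isLocalMin hp i, norm_sub_rev,
    Submodule.starProjection_orthogonal_val]

theorem lowRankLoss_le_of_isLocalMin (hp : IsLocalMin (lowRankLoss m) p)
    (q : (ι → W) × (W →L[ℝ] E)) : lowRankLoss m p ≤ lowRankLoss m q := by
  by_cases hB : Function.Injective p.2
  swap
  · have hzero : lowRankLoss m p = 0 := by
      simp [lowRankLoss, lowRankLoss.apply_eq_of_isLocalMin_of_not_injective hp hB]
    rw [hzero]
    exact Finset.sum_nonneg fun i _ => sq_nonneg _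
  have : FiniteDimensional ℝ W := FiniteDimensional.of_injective p.2.toLinearMap hB
  have hrank : finrank ℝ q.2.range ≤ finrank ℝ p.2.range :=
    (LinearMap.finrank_range_le _).trans_eq (LinearMap.finrank_range_of_inj hB).symm
  have hkyFan := trace_comp_starProjection_le (isPositive_frameOperator m)
    (lowRankLoss.range_mem_invtSubmodule_of_isLocalMin hp)
    (fun _ hx _ hw => lowRankLoss.norm_sq_mul_inner_frameOperator_le_of_isLocalMin hp hx hw) hrank
  have hsplit (U : Submodule ℝ E) := trace_comp_starProjection_add_orthogonal (frameOperator m) U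
  calc lowRankLoss m p
      = ∑ i, ‖p.2.rangeᗮ.starProjection (m i)‖ ^ 2 := lowRankLoss_eq_of_isLocalMin hp
    _ ≤ ∑ i, ‖q.2.rangeᗮ.starProjection (m i)‖ ^ 2 := by
        rw [← trace_frameOperator_comp_starProjection, ← trace_frameOperator_comp_starProjection]
        linarith [hsplit p.2.range, hsplit q.2.range]
    _ ≤ lowRankLoss m q := sum_norm_sq_starProjection_orthogonal_le_lowRankLoss m q

end LowRankLoss

section MultiTaskLoss

theorem exists_norm_sub_sq_eq {V E F : Type*} [AddCommGroup V] [Module ℝ V]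
    [NormedAddCommGroup E] [InnerProductSpace ℝ E] [FiniteDimensional ℝ E]
    [NormedAddCommGroup F] [InnerProductSpace ℝ F] {T : V →ₗ[ℝ] E} {X : V →ₗ[ℝ] F}
    (hT : Function.Surjective T) (hXT : ∀ v, ‖X v‖ = ‖T v‖) (y : F) :
    ∃ (z : E) (c : ℝ), ∀ v, ‖X v - y‖ ^ 2 = ‖T v - z‖ ^ 2 + c := by
  obtain ⟨g, hg⟩ := T.exists_rightInverse_of_surjective (LinearMap.range_eq_top.mpr hT)
  have hX_factor (v : V) : X v = X (g (T v)) := by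
    rw [← sub_eq_zero, ← map_sub, ← norm_eq_zero, hXT, map_sub, ← LinearMap.comp_apply T g, hg,
      LinearMap.id_apply, sub_self, norm_zero]
  let φ : E →L[ℝ] ℝ := (innerₛₗ ℝ y ∘ₗ X ∘ₗ g).toContinuousLinearMap
  let z : E := (InnerProductSpace.toDual ℝ E).symm φ
  have hz (v : V) : ⟪X v, y⟫ = ⟪T v, z⟫ := by
    rw [real_inner_comm z, InnerProductSpace.toDual_symm_apply, real_inner_comm, hX_factor]
    rfl
  refine ⟨z, ‖y‖ ^ 2 - ‖z‖ ^ 2, fun v => ?_⟩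
  rw [norm_sub_sq_real, norm_sub_sq_real, hXT, hz]
  ring

variable {ι : Type*} [Fintype ι]
variable {W : Type*} [NormedAddCommGroup W] [NormedSpace ℝ W]
variable {V : Type*} [NormedAddCommGroup V] [NormedSpace ℝ V]
variable {E : Type*} [NormedAddCommGroup E] [InnerProductSpace ℝ E]

variable {F : ι → Type*} [∀ i, NormedAddCommGroup (F i)] [∀ i, InnerProductSpace ℝ (F i)]

/-- The linear multi-task objective `∑ i, ‖X i (B (A i)) - y i‖ ^ 2`, as a function of the pair
`(A, B)` of task-specific outputs and shared module. -/
def multiTaskLoss (X : ∀ i, V →ₗ[ℝ] F i) (y : ∀ i, F i) (p : (ι → W) × (W →L[ℝ] V)) : ℝ :=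
  ∑ i, ‖X i (p.2 (p.1 i)) - y i‖ ^ 2

theorem multiTaskLoss_le_of_isLocalMin_of_surjective [FiniteDimensional ℝ W]
    [FiniteDimensional ℝ E] {X : ∀ i, V →ₗ[ℝ] F i} {y : ∀ i, F i} {T : V →L[ℝ] E}
    (hT : Function.Surjective T) {s : ι → ℝ} (hs : ∀ i, s i ≠ 0)
    (hX : ∀ i v, ‖X i v‖ = ‖s i • T v‖) {p : (ι → W) × (W →L[ℝ] V)}
    (hp : IsLocalMin (multiTaskLoss X y) p) (q : (ι → W) × (W →L[ℝ] V)) :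
    multiTaskLoss X y p ≤ multiTaskLoss X y q := by
  have hsT (i : ι) : Function.Surjective (s i • T.toLinearMap) :=
    (MulAction.surjective₀ (hs i)).comp hT
  choose z c hz using fun i => exists_norm_sub_sq_eq (hsT i) (hX i) (y i)
  let ψ : (ι → W) × (W →L[ℝ] V) →ₗ[ℝ] (ι → W) × (W →L[ℝ] E) :=
    (LinearMap.pi fun i => s i • LinearMap.proj i).prodMap
      (ContinuousLinearMap.compL ℝ W V E T).toLinearMap
  have hψ_surj : Function.Surjective ψ := by
    rintro ⟨a, D⟩
    obtain ⟨g, hg⟩ :=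
      T.toLinearMap.exists_rightInverse_of_surjective (LinearMap.range_eq_top.mpr hT)
    refine ⟨(fun i => (s i)⁻¹ • a i, g.toContinuousLinearMap.comp D), Prod.ext ?_ ?_⟩
    · ext i
      simp [ψ, smul_inv_smul₀ (hs i)]
    · ext u
      simpa [ψ] using LinearMap.congr_fun hg (D u)
  have hloss : multiTaskLoss X y = fun q => lowRankLoss z (ψ q) + ∑ i, c i := by
    funext q
    simp [multiTaskLoss, lowRankLoss, hz, Finset.sum_add_distrib, ψ]
  have hmin : IsLocalMin (lowRankLoss z) (ψ p) :=
    isLocalMin_of_comp_isOpenMap (ψ.isOpenMap_of_finiteDimensional hψ_surj)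
      (hp.mono fun q hq => by simpa [hloss] using hq)
  simpa [hloss] using lowRankLoss_le_of_isLocalMin hmin (ψ q)

theorem multiTaskLoss_le_of_isLocalMin [FiniteDimensional ℝ W] [FiniteDimensional ℝ V]
    {X : ∀ i, V →ₗ[ℝ] F i} {y : ∀ i, F i} {N : V → ℝ} {α : ι → ℝ} (hα : ∀ i, 0 < α i)
    (hX : ∀ i v, ‖X i v‖ ^ 2 = α i * N v) {p : (ι → W) × (W →L[ℝ] V)}
    (hp : IsLocalMin (multiTaskLoss X y) p) (q : (ι → W) × (W →L[ℝ] V)) :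
    multiTaskLoss X y p ≤ multiTaskLoss X y q := by
  rcases isEmpty_or_nonempty ι with _ | ⟨⟨i₀⟩⟩
  · simp [multiTaskLoss]
  refine multiTaskLoss_le_of_isLocalMin_of_surjective
    (T := (X i₀).rangeRestrict.toContinuousLinearMap) (s := fun i => √(α i / α i₀))
    (X i₀).surjective_rangeRestrict
    (fun i => (Real.sqrt_pos.mpr (div_pos (hα i) (hα i₀))).ne') (fun i v => ?_) hp q
  rw [← sq_eq_sq₀ (norm_nonneg _) (norm_nonneg _), norm_smul, mul_pow, Real.norm_eq_abs, sq_abs,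
    Real.sq_sqrt (div_pos (hα i) (hα i₀)).le, hX]
  have hX₀ : ‖(X i₀).rangeRestrict.toContinuousLinearMap v‖ ^ 2 = α i₀ * N v := hX i₀ v
  rw [hX₀, ← mul_assoc, div_mul_cancel₀ _ (hα i₀).ne']

end MultiTaskLoss

theorem vnorm_eq_norm_toLp {n : ℕ} (v : Fin n → ℝ) : vnorm v = ‖WithLp.toLp 2 v‖ := by
  simp [vnorm, EuclideanSpace.norm_eq]

theorem norm_toLp_mulVec_sq {n κ : Type*} [Fintype n] [Fintype κ] (X : Matrix n κ ℝ) (v : κ → ℝ) :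
    ‖WithLp.toLp 2 (X *ᵥ v)‖ ^ 2 = v ⬝ᵥ ((Xᵀ * X) *ᵥ v) := by
  rw [EuclideanSpace.real_norm_sq_eq, ← mulVec_mulVec, dotProduct_mulVec, vecMul_transpose]
  simp only [dotProduct, sq]

theorem mtl_local_min_is_global_general {ι n κ : Type*} [Fintype ι] [Fintype n] [Fintype κ]
    {m : ι → ℕ} {X : ∀ i, Matrix (Fin (m i)) n ℝ} {S : Matrix n n ℝ} {α : ι → ℝ}
    (hα : ∀ i, 0 < α i) (hXS : ∀ i, (X i)ᵀ * X i = α i • S) {y : ∀ i, Fin (m i) → ℝ}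
    {f : (ι → κ → ℝ) × Matrix n κ ℝ → ℝ}
    (hf : f = fun p => ∑ i, vnorm (fun j => (X i *ᵥ (p.2 *ᵥ p.1 i)) j - y i j) ^ 2)
    {p : (ι → κ → ℝ) × Matrix n κ ℝ} (hp : IsLocalMin f p) (q : (ι → κ → ℝ) × Matrix n κ ℝ) :
    f p ≤ f q := by
  classical
  let Xₗ (i : ι) : (n → ℝ) →ₗ[ℝ] EuclideanSpace ℝ (Fin (m i)) :=
    (WithLp.linearEquiv 2 ℝ _).symm.toLinearMap ∘ₗ (X i).mulVecLin
  let e : ((ι → κ → ℝ) × Matrix n κ ℝ) ≃ₗ[ℝ] (ι → κ → ℝ) × ((κ → ℝ) →L[ℝ] (n → ℝ)) :=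
    (LinearEquiv.refl ℝ _).prodCongr (Matrix.toLin'.trans LinearMap.toContinuousLinearMap)
  have hfe : f = multiTaskLoss Xₗ (fun i => WithLp.toLp 2 (y i)) ∘ e := by
    funext q
    simp only [hf, vnorm_eq_norm_toLp]
    rfl
  have hXₗ (i : ι) (v : n → ℝ) : ‖Xₗ i v‖ ^ 2 = α i * (v ⬝ᵥ S *ᵥ v) := by
    refine (norm_toLp_mulVec_sq (X i) v).trans ?_
    rw [hXS, smul_mulVec, dotProduct_smul, smul_eq_mul]
  rw [hfe] at hp ⊢
  exact multiTaskLoss_le_of_isLocalMin hα hXₗ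
    (isLocalMin_of_comp_isOpenMap (e.toLinearMap.isOpenMap_of_finiteDimensional e.surjective) hp) _

/-- Lemma: no spurious local minima: if `XᵢᵀXᵢ = αᵢ Σ` with `αᵢ > 0`
and `Σ` positive definite, then every local minimum of the linear MTL objective
`f(A₁,…,A_k; B) = Σᵢ ‖Xᵢ B Aᵢ − yᵢ‖²` is a global minimum. -/
theorem mtl_local_min_is_global
    (k d r : ℕ) (hk : 1 ≤ k) (hr : 1 ≤ r)
    (m : Fin k → ℕ)
    (X : ∀ i : Fin k, Matrix (Fin (m i)) (Fin d) ℝ)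
    (S : Matrix (Fin d) (Fin d) ℝ) (hSpd : S.PosDef)
    (α : Fin k → ℝ) (hα : ∀ i, 0 < α i)
    (hXS : ∀ i, (X i)ᵀ * X i = α i • S)
    (y : ∀ i : Fin k, Fin (m i) → ℝ)
    (f : (Fin k → Fin r → ℝ) × Matrix (Fin d) (Fin r) ℝ → ℝ)
    (hf : f = fun p => ∑ i, vnorm (fun j => (X i).mulVec (p.2.mulVec (p.1 i)) j - y i j) ^ 2)
    (p : (Fin k → Fin r → ℝ) × Matrix (Fin d) (Fin r) ℝ)
    (hp : IsLocalMin f p) :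
    ∀ q, f p ≤ f q :=
  mtl_local_min_is_global_general hα hXS hf hp
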